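/- Let Ω be a factor set on Fin n and let η : (Fin n → Fin 4) → ℝ satisfy η(b) < 1/2 for every b. Define λ : (Fin n → Fin 4) → ℝ by λ(a) = Π_{b : supp(b) ∈ Ω} (1 − 2·η(b))^{⟨a,b⟩}, the product over all b whose support belongs to Ω, with exponent the symplectic indicator ⟨a,b⟩ ∈ {0,1}. Then there exists r : (Fin n → Fin 4) → ℝ with r(b) = 0 whenever supp(b) ∉ Ω, such that for every a, λ(a) = exp(−Σ_{b ◁ a, supp(b) ∈ Ω} r(b)). -/

import Mathlib

/-!
Since `η b < 1/2`, each factor `1 - 2 η b` is positive and `log λ` is the sum of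
`⟨a,b⟩ log (1 - 2 η b)` over the `b` with support in `Ω`. It therefore suffices to write each
function `a ↦ ⟨a,b⟩` as a sum over `c ◁ a` with support in `Ω`. If `A` is the set of
coordinates where `a` and `b` anticommute, the binomial theorem gives
`(-1)^|A| = ∑_{S ⊆ A} (-2)^|S|`, hence `⟨a,b⟩ = ∑_{∅ ≠ S ⊆ A} (-1/2) (-2)^|S|`. The subsets
`S ⊆ A` correspond, by restricting `a` to `S`, to the `c ◁ a` that anticommute with `b`
at each coordinate of `supp c`. Such a `c` has `supp c ⊆ supp b`, so a nonzero one has support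
in `Ω` by downward closure. This is `parity_eq_sum_parityCoeff`.
-/

/-- The support of a Pauli string: the set of non-identity coordinates. -/
def pauliSupp {n : ℕ} (a : Fin n → Fin 4) : Finset (Fin n) :=
  Finset.univ.filter (fun i => a i ≠ 0)

/-- `b` is majorized by `a` (`b ◁ a`): on the support of `b`, `a` agrees with `b`. -/
def pauliMaj {n : ℕ} (b a : Fin n → Fin 4) : Prop :=
  ∀ i, b i ≠ 0 → a i = b i

instance {n : ℕ} (b a : Fin n → Fin 4) : Decidable (pauliMaj b a) :=
  inferInstanceAs (Decidable (∀ i, b i ≠ 0 → a i = b i))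

/-- Two single-qubit Pauli labels anticommute iff both are non-identity and distinct. -/
def pauliAnti (p q : Fin 4) : Prop := p ≠ 0 ∧ q ≠ 0 ∧ p ≠ q

instance (p q : Fin 4) : Decidable (pauliAnti p q) :=
  inferInstanceAs (Decidable (p ≠ 0 ∧ q ≠ 0 ∧ p ≠ q))

/-- The number of coordinates at which two Pauli strings anticommute. -/
def pauliN {n : ℕ} (a b : Fin n → Fin 4) : ℕ :=
  (Finset.univ.filter (fun i => pauliAnti (a i) (b i))).card

/-- The coefficient of `c` in the expansion of `a ↦ ⟨a,b⟩` over nonzero `c ◁ a`: it is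
`(-1/2) (-2)^(w c)` when `c` anticommutes with `b` at every coordinate of its support, and
`0` otherwise. -/
noncomputable def parityCoeff {n : ℕ} (b c : Fin n → Fin 4) : ℝ :=
  if ∀ i, c i ≠ 0 → pauliAnti (c i) (b i) then (-1 / 2) * (-2) ^ (pauliSupp c).card else 0

lemma parity_eq_sum_powerset {ι : Type*} [DecidableEq ι] (A : Finset ι) :
    ((A.card % 2 : ℕ) : ℝ) = ∑ S ∈ A.powerset.erase ∅, (-1 / 2 : ℝ) * (-2) ^ S.card := by
  have h := Finset.sum_pow_mul_eq_add_pow (-2 : ℝ) 1 A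
  rw [← Finset.add_sum_erase _ _ (Finset.empty_mem_powerset A)] at h
  simp only [one_pow, mul_one, Finset.card_empty, pow_zero] at h
  rw [← Finset.mul_sum, eq_sub_of_add_eq' h]
  rcases Nat.even_or_odd A.card with he | ho
  · rw [Nat.even_iff.mp he, show (-2 + 1 : ℝ) = -1 by norm_num, he.neg_one_pow]; norm_num
  · rw [Nat.odd_iff.mp ho, show (-2 + 1 : ℝ) = -1 by norm_num, ho.neg_one_pow]; norm_num

lemma parity_eq_sum_parityCoeff {n : ℕ} (Ω : Finset (Finset (Fin n)))
    (hne : ∀ ν ∈ Ω, ν.Nonempty)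
    (hdc : ∀ ν ∈ Ω, ∀ μ ⊆ ν, μ.Nonempty → μ ∈ Ω)
    (a b : Fin n → Fin 4) (hb : pauliSupp b ∈ Ω) :
    ((pauliN a b % 2 : ℕ) : ℝ) =
      ∑ c ∈ Finset.univ.filter (fun c => pauliMaj c a ∧ pauliSupp c ∈ Ω), parityCoeff b c := by
  unfold parityCoeff pauliN
  rw [parity_eq_sum_powerset, ← Finset.sum_filter]
  -- A subset `S` of the anticommuting coordinates corresponds to the restriction of `a` to `S`.
  have hsupp : ∀ S ⊆ Finset.univ.filter (fun i => pauliAnti (a i) (b i)),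
      pauliSupp (fun i => if i ∈ S then a i else 0) = S := by
    intro S hS
    ext i
    simp only [pauliSupp, Finset.mem_filter, Finset.mem_univ, true_and]
    by_cases hi : i ∈ S
    · simpa [hi] using (Finset.mem_filter.mp (hS hi)).2.1
    · simp [hi]
  refine Finset.sum_bij' (fun S _ => fun i => if i ∈ S then a i else 0)
    (fun c _ => pauliSupp c) ?_ ?_ ?_ ?_ ?_
  · intro S hS
    rw [Finset.mem_erase, Finset.mem_powerset] at hS
    simp only [Finset.mem_filter, Finset.mem_univ, true_and]
    refine ⟨⟨?_, ?_⟩, ?_⟩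
    · intro i hi
      by_cases h : i ∈ S <;> simp_all
    · rw [hsupp S hS.2]
      refine hdc _ hb _ (fun i hi => ?_) (Finset.nonempty_iff_ne_empty.mpr hS.1)
      simpa [pauliSupp] using (Finset.mem_filter.mp (hS.2 hi)).2.2.1
    · intro i hi
      by_cases h : i ∈ S
      · simpa [h] using (Finset.mem_filter.mp (hS.2 h)).2
      · simp [h] at hi
  · intro c hc
    simp only [Finset.mem_filter, Finset.mem_univ, true_and] at hc
    rw [Finset.mem_erase, Finset.mem_powerset]
    refine ⟨(hne _ hc.1.2).ne_empty, fun i hi => ?_⟩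
    have hi' : c i ≠ 0 := by simpa [pauliSupp] using hi
    simpa [hc.1.1 i hi'] using hc.2 i hi'
  · intro S hS
    exact hsupp S (Finset.mem_powerset.mp (Finset.mem_erase.mp hS).2)
  · intro c hc
    simp only [Finset.mem_filter, Finset.mem_univ, true_and] at hc
    funext i
    by_cases hi : c i = 0
    · simp [pauliSupp, hi]
    · simp [pauliSupp, hi, hc.1.1 i hi]
  · intro S hS
    rw [hsupp S (Finset.mem_powerset.mp (Finset.mem_erase.mp hS).2)]

/-- Forward direction of the factorization lemma: the Pauli eigenvalues
`λ a = Π_{supp b ∈ Ω} (1 − 2 η b)^{⟨a,b⟩}` of a concatenation of `Ω`-supported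
two-outcome Pauli maps factorize over `Ω`-supported Paulis majorized by `a`, i.e.
`λ a = exp(−Σ_{b ◁ a, supp b ∈ Ω} r b)` for some `r` vanishing off `Ω`. -/
theorem omega_local_factorization (n : ℕ) (Ω : Finset (Finset (Fin n)))
    (hne : ∀ ν ∈ Ω, ν.Nonempty)
    (hdc : ∀ ν ∈ Ω, ∀ μ ⊆ ν, μ.Nonempty → μ ∈ Ω)
    (η : (Fin n → Fin 4) → ℝ) (hη : ∀ b, η b < 1 / 2)
    (lam : (Fin n → Fin 4) → ℝ)
    (hlam : ∀ a, lam a = ∏ b ∈ Finset.univ.filter (fun b => pauliSupp b ∈ Ω),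
        (1 - 2 * η b) ^ (pauliN a b % 2)) :
    ∃ r : (Fin n → Fin 4) → ℝ, (∀ b, pauliSupp b ∉ Ω → r b = 0) ∧
      ∀ a, lam a = Real.exp
        (-(∑ b ∈ Finset.univ.filter (fun b => pauliMaj b a ∧ pauliSupp b ∈ Ω), r b)) := by
  classical
  refine ⟨fun c => if pauliSupp c ∈ Ω then
    -∑ b ∈ Finset.univ.filter (fun b => pauliSupp b ∈ Ω),
      Real.log (1 - 2 * η b) * parityCoeff b c else 0, fun b hb => if_neg hb, fun a => ?_⟩
  have hsum : -(∑ c ∈ Finset.univ.filter (fun c => pauliMaj c a ∧ pauliSupp c ∈ Ω),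
      if pauliSupp c ∈ Ω then
        -∑ b ∈ Finset.univ.filter (fun b => pauliSupp b ∈ Ω),
          Real.log (1 - 2 * η b) * parityCoeff b c else 0) =
      ∑ b ∈ Finset.univ.filter (fun b => pauliSupp b ∈ Ω),
        ((pauliN a b % 2 : ℕ) : ℝ) * Real.log (1 - 2 * η b) := by
    rw [Finset.sum_congr rfl (fun c hc => if_pos (Finset.mem_filter.mp hc).2.2),
      Finset.sum_neg_distrib, neg_neg, Finset.sum_comm]
    refine Finset.sum_congr rfl fun b hb => ?_
    rw [← Finset.mul_sum,
      ← parity_eq_sum_parityCoeff Ω hne hdc a b (Finset.mem_filter.mp hb).2, mul_comm]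
  rw [hsum, Real.exp_sum, hlam]
  refine Finset.prod_congr rfl fun b _ => ?_
  rw [Real.exp_nat_mul, Real.exp_log (by linarith [hη b])]
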